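/- Let n ≥ 4. Suppose that for every symmetric Laurent polynomial g ∈ R_{n−2}^{S_{n−2}}, the element (∏_{1 ≤ i < j ≤ n−2} (1 − x_i x_j)) · g lies in the image ds_n(J_n). Then ds_n(J_n) = J_{n−2}, i.e. ds_n : J_n → J_{n−2} is surjective. -/

import Mathlib

/-!
Common setup: `R n` is the ring of Laurent polynomials
`ℤ[x₁^{±1}, …, xₙ^{±1}]`, realized as the group algebra over `ℤ` of the
group `ℤ^n` of exponent vectors (`AddMonoidAlgebra ℤ (Fin n → ℤ)`).
-/

noncomputable section

/-- The ring `Rₙ = ℤ[x₁^{±1}, …, xₙ^{±1}]` of Laurent polynomials in `n` variables. -/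
abbrev R (n : ℕ) : Type := AddMonoidAlgebra ℤ (Fin n → ℤ)

/-- The variable `xᵢ` of `R n` (`i` is a `0`-based index). -/
def X {n : ℕ} (i : Fin n) : R n := AddMonoidAlgebra.single (Pi.single i (1 : ℤ)) 1

/-- The inverse `xᵢ⁻¹` of the variable `xᵢ` of `R n`. -/
def Xinv {n : ℕ} (i : Fin n) : R n := AddMonoidAlgebra.single (Pi.single i (-1 : ℤ)) 1

/-- The action of a permutation `w` on exponent vectors. -/
def permExp {n : ℕ} (w : Equiv.Perm (Fin n)) : (Fin n → ℤ) →+ (Fin n → ℤ) :=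
  AddMonoidHom.mk' (fun m => m ∘ w.symm) (fun _ _ => rfl)

/-- The action of `w ∈ Sₙ` on `R n`, permuting the variables (`xᵢ ↦ x_{w i}`). -/
def permHom {n : ℕ} (w : Equiv.Perm (Fin n)) : R n →+* R n :=
  AddMonoidAlgebra.mapDomainRingHom ℤ (permExp w)

/-- `f` is a symmetric Laurent polynomial, i.e. `f ∈ Rₙ^{Sₙ}`. -/
def SymmP {n : ℕ} (f : R n) : Prop := ∀ w : Equiv.Perm (Fin n), permHom w f = f

/-- The map of exponent groups underlying the evaluation
`xᵢ ↦ xᵢ (1 ≤ i ≤ n-2), x_{n-1} ↦ t, xₙ ↦ t⁻¹`; the second coordinate of the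
target records the exponent of `t`. -/
def evExp (n : ℕ) : (Fin n → ℤ) →+ ((Fin (n - 2) → ℤ) × ℤ) :=
  AddMonoidHom.mk'
    (fun m => (fun i => m (Fin.castLE (Nat.sub_le n 2) i),
      if h : 2 ≤ n then m ⟨n - 2, by omega⟩ - m ⟨n - 1, by omega⟩ else 0))
    (by
      intro a b
      refine Prod.ext (funext fun i => rfl) ?_
      by_cases h : 2 ≤ n
      · simp [h]; ring
      · simp [h])

/-- The evaluation homomorphism
`evₙ : ℤ[x₁^{±1},…,xₙ^{±1}] → ℤ[x₁^{±1},…,x_{n-2}^{±1}, t^{±1}]` determined by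
`xᵢ ↦ xᵢ` for `1 ≤ i ≤ n-2`, `x_{n-1} ↦ t`, `xₙ ↦ t⁻¹`.  The target is realized
as the group algebra of `ℤ^{n-2} × ℤ`, the last factor recording the exponent
of `t`. -/
def ev (n : ℕ) : R n →+* AddMonoidAlgebra ℤ ((Fin (n - 2) → ℤ) × ℤ) :=
  AddMonoidAlgebra.mapDomainRingHom ℤ (evExp n)

/-- An element of `ℤ[x₁^{±1},…,x_{n-2}^{±1}, t^{±1}]` "does not involve `t`",
i.e. it lies in the image of the subring `ℤ[x₁^{±1},…,x_{n-2}^{±1}]`. -/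
def NoT (n : ℕ) (g : AddMonoidAlgebra ℤ ((Fin (n - 2) → ℤ) × ℤ)) : Prop :=
  g ∈ Set.range
    (AddMonoidAlgebra.mapDomainRingHom ℤ (AddMonoidHom.inl (Fin (n - 2) → ℤ) ℤ))

/-- `J n`: for `n ≥ 2`, the set of symmetric Laurent polynomials `f` such that
`evₙ f` does not involve `t`; for `n = 0, 1` it is all of `Rₙ^{Sₙ}`. -/
def J (n : ℕ) : Set (R n) := {f | SymmP f ∧ (2 ≤ n → NoT n (ev n f))}

/-- Restriction of exponent vectors to the first `n - 2` coordinates. -/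
def resExp (n : ℕ) : (Fin n → ℤ) →+ (Fin (n - 2) → ℤ) :=
  AddMonoidHom.mk' (fun m i => m (Fin.castLE (Nat.sub_le n 2) i)) (fun _ _ => rfl)

/-- The ring homomorphism `R n → R (n-2)` which, on `J n`, is the
Duflo–Serganova map `dsₙ`: for `f ∈ J n` it is exactly `evₙ f` regarded as an
element of `ℤ[x₁^{±1},…,x_{n-2}^{±1}]` (the `t`-degree-`0` part of `evₙ f`). -/
def ds (n : ℕ) : R n →+* R (n - 2) :=
  AddMonoidAlgebra.mapDomainRingHom ℤ (resExp n)

/-- The product `∏_{1 ≤ i < j ≤ n} (1 - xᵢ xⱼ)`. -/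
def P (n : ℕ) : R n :=
  ∏ p ∈ Finset.univ.filter (fun p : Fin n × Fin n => p.1 < p.2), (1 - X p.1 * X p.2)

/-! ### Monomial substitutions -/

/-- The ring homomorphism attached to a map of exponent groups. -/
def Subst {a b : ℕ} (φ : (Fin a → ℤ) →+ (Fin b → ℤ)) : R a →+* R b :=
  AddMonoidAlgebra.mapDomainRingHom ℤ φ

/-- The monomial with exponent `d`. -/
def mon {a : ℕ} (d : Fin a → ℤ) : R a := AddMonoidAlgebra.single d 1

lemma X_eq {a : ℕ} (i : Fin a) : X i = mon (Pi.single i (1 : ℤ)) := rfl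

lemma Subst_single {a b : ℕ} (φ : (Fin a → ℤ) →+ (Fin b → ℤ)) (d : Fin a → ℤ) (c : ℤ) :
    Subst φ (AddMonoidAlgebra.single d c) = AddMonoidAlgebra.single (φ d) c := by
  simp [Subst]

lemma Subst_mon {a b : ℕ} (φ : (Fin a → ℤ) →+ (Fin b → ℤ)) (d : Fin a → ℤ) :
    Subst φ (mon d) = mon (φ d) := Subst_single φ d 1

lemma mon_add {a : ℕ} (d e : Fin a → ℤ) : mon (d + e) = mon d * mon e := by
  simp [mon, AddMonoidAlgebra.single_mul_single]

lemma mon_zero {a : ℕ} : mon (0 : Fin a → ℤ) = 1 := rfl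

lemma mon_inj {a : ℕ} {d e : Fin a → ℤ} : mon d = mon e ↔ d = e :=
  AddMonoidAlgebra.single_left_inj one_ne_zero

lemma mon_isUnit {a : ℕ} (d : Fin a → ℤ) : IsUnit (mon d) :=
  IsUnit.of_mul_eq_one (mon (-d)) (by rw [← mon_add, add_neg_cancel, mon_zero])

lemma Subst_Subst {a b c : ℕ} (φ : (Fin a → ℤ) →+ (Fin b → ℤ)) (ψ : (Fin b → ℤ) →+ (Fin c → ℤ))
    (f : R a) : Subst ψ (Subst φ f) = Subst (ψ.comp φ) f := by
  unfold Subst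
  rw [AddMonoidAlgebra.mapDomainRingHom_comp]
  rfl

lemma Subst_congr {a b : ℕ} {φ ψ : (Fin a → ℤ) →+ (Fin b → ℤ)} (h : ∀ m, φ m = ψ m) (f : R a) :
    Subst φ f = Subst ψ f := by
  rw [AddMonoidHom.ext h]

lemma Subst_comm {a b b' c : ℕ} {φ : (Fin a → ℤ) →+ (Fin b → ℤ)} {ψ : (Fin b → ℤ) →+ (Fin c → ℤ)}
    {φ' : (Fin a → ℤ) →+ (Fin b' → ℤ)} {ψ' : (Fin b' → ℤ) →+ (Fin c → ℤ)}
    (h : ∀ m, ψ (φ m) = ψ' (φ' m)) (f : R a) : Subst ψ (Subst φ f) = Subst ψ' (Subst φ' f) := by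
  rw [Subst_Subst, Subst_Subst]; exact Subst_congr h f

lemma permHom_eq {a : ℕ} (w : Equiv.Perm (Fin a)) : permHom w = Subst (permExp w) := rfl

lemma permExp_apply {a : ℕ} (w : Equiv.Perm (Fin a)) (m : Fin a → ℤ) (i : Fin a) :
    permExp w m i = m (w.symm i) := rfl

lemma permHom_mul {a : ℕ} (w v : Equiv.Perm (Fin a)) (f : R a) :
    permHom (w * v) f = permHom w (permHom v f) := by
  simp only [permHom_eq, Subst_Subst]
  exact Subst_congr (fun m => rfl) f

lemma permExp_single {a : ℕ} (w : Equiv.Perm (Fin a)) (i : Fin a) (k : ℤ) :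
    permExp w (Pi.single i k) = Pi.single (w i) k := by
  funext j
  simp only [permExp_apply, Pi.single_apply, Equiv.symm_apply_eq]

lemma permHom_X {a : ℕ} (w : Equiv.Perm (Fin a)) (i : Fin a) : permHom w (X i) = X (w i) := by
  rw [permHom_eq, X_eq, Subst_mon, permExp_single]; rfl

lemma Subst_inj {a b : ℕ} {φ : (Fin a → ℤ) →+ (Fin b → ℤ)} (h : Function.Injective φ) :
    Function.Injective (Subst φ) := AddMonoidAlgebra.mapDomain_injective h

instance {a : ℕ} : IsDomain (R a) := by infer_instance

lemma R_induction {a : ℕ} {p : R a → Prop} (f : R a) (h0 : p 0)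
    (hadd : ∀ f g, p f → p g → p (f + g)) (hs : ∀ m c, p (AddMonoidAlgebra.single m c)) : p f := by
  rcases f with ⟨f⟩
  induction f using Finsupp.induction_linear with
  | zero => exact h0
  | add f g hf hg => exact hadd _ _ hf hg
  | single m c => exact hs m c

/-! ### The primes `1 - x^d` -/

/-- The projection `m ↦ m - lam m • d`. -/
def projExp {a : ℕ} (lam : (Fin a → ℤ) →+ ℤ) (d : Fin a → ℤ) : (Fin a → ℤ) →+ (Fin a → ℤ) :=
  AddMonoidHom.mk' (fun m => m - lam m • d) (fun x y => by
    rw [map_add, add_smul]; abel)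

lemma projExp_apply {a : ℕ} (lam : (Fin a → ℤ) →+ ℤ) (d m : Fin a → ℤ) :
    projExp lam d m = m - lam m • d := rfl

lemma one_sub_mon_dvd_zsmul {a : ℕ} (d : Fin a → ℤ) (k : ℤ) :
    (1 - mon d) ∣ (1 - mon (k • d)) := by
  have key : ∀ n : ℕ, (1 - mon d) ∣ (1 - mon ((n : ℤ) • d)) := by
    intro n
    induction n with
    | zero => simp [mon_zero]
    | succ n ih =>
      have : 1 - mon (((n + 1 : ℕ) : ℤ) • d) = (1 - mon d) + mon d * (1 - mon ((n : ℤ) • d)) := by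
        rw [Nat.cast_succ, add_smul, one_smul, mon_add]; ring
      rw [this]
      exact dvd_add dvd_rfl (Dvd.dvd.mul_left ih _)
  obtain ⟨n, rfl | rfl⟩ := k.eq_nat_or_neg
  · exact key n
  · have : 1 - mon (-(n : ℤ) • d) = - mon (-(n : ℤ) • d) * (1 - mon ((n : ℤ) • d)) := by
      have h : mon (-(n : ℤ) • d) * mon ((n : ℤ) • d) = 1 := by
        rw [← mon_add, ← add_smul]; simp [mon_zero]
      linear_combination -h
    rw [this]
    exact Dvd.dvd.mul_left (key n) _

lemma dvd_sub_proj {a : ℕ} (lam : (Fin a → ℤ) →+ ℤ) (d : Fin a → ℤ) (f : R a) :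
    (1 - mon d) ∣ f - Subst (projExp lam d) f := by
  induction f using R_induction with
  | h0 => simp
  | hadd f g hf hg =>
    rw [map_add, add_sub_add_comm]; exact dvd_add hf hg
  | hs m c =>
    rw [Subst_single, projExp_apply]
    have : (AddMonoidAlgebra.single m c : R a) - AddMonoidAlgebra.single (m - lam m • d) c
        = - AddMonoidAlgebra.single (m - lam m • d) c * (1 - mon (lam m • d)) := by
      rw [mul_sub, mul_one, neg_mul, mon, AddMonoidAlgebra.single_mul_single]
      simp; ring
    rw [this]
    exact Dvd.dvd.mul_left (one_sub_mon_dvd_zsmul _ _) _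

lemma proj_self {a : ℕ} {lam : (Fin a → ℤ) →+ ℤ} {d : Fin a → ℤ} (h : lam d = 1) :
    Subst (projExp lam d) (1 - mon d) = 0 := by
  rw [map_sub, map_one, Subst_mon, projExp_apply, h]
  simp [mon_zero]

lemma dvd_iff_proj {a : ℕ} {lam : (Fin a → ℤ) →+ ℤ} {d : Fin a → ℤ} (h : lam d = 1) (f : R a) :
    (1 - mon d) ∣ f ↔ Subst (projExp lam d) f = 0 := by
  constructor
  · rintro ⟨g, rfl⟩
    rw [map_mul, proj_self h, zero_mul]
  · intro hf
    have := dvd_sub_proj lam d f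
    rwa [hf, sub_zero] at this

lemma prod_dvd_of_proj {a : ℕ} {ι : Type*} (s : Finset ι) (lam : ι → (Fin a → ℤ) →+ ℤ)
    (d : ι → Fin a → ℤ) (h1 : ∀ p ∈ s, lam p (d p) = 1)
    (h2 : ∀ p ∈ s, ∀ q ∈ s, p ≠ q → lam p (d q) • d p ≠ d q) (f : R a)
    (hf : ∀ p ∈ s, Subst (projExp (lam p) (d p)) f = 0) :
    (∏ p ∈ s, (1 - mon (d p))) ∣ f := by
  classical
  induction s using Finset.induction_on with
  | empty => simp
  | insert p s hp ih =>
    obtain ⟨g, rfl⟩ := ih (fun q hq => h1 q (Finset.mem_insert_of_mem hq))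
      (fun q hq r hr => h2 q (Finset.mem_insert_of_mem hq) r (Finset.mem_insert_of_mem hr))
      (fun q hq => hf q (Finset.mem_insert_of_mem hq))
    have h := hf p (Finset.mem_insert_self _ _)
    rw [map_mul, mul_eq_zero, map_prod, Finset.prod_eq_zero_iff] at h
    rw [Finset.prod_insert hp, mul_comm]
    refine mul_dvd_mul_left _ ?_
    rw [dvd_iff_proj (h1 p (Finset.mem_insert_self _ _))]
    refine h.resolve_left ?_
    rintro ⟨q, hq, hq0⟩
    rw [map_sub, map_one, Subst_mon, sub_eq_zero, ← mon_zero, mon_inj, projExp_apply] at hq0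
    exact h2 p (Finset.mem_insert_self _ _) q (Finset.mem_insert_of_mem hq)
      (by rintro rfl; exact hp hq) (sub_eq_zero.mp hq0.symm).symm


/-! ### The evaluation maps -/

/-- The next to last index. -/
def pa (N : ℕ) : Fin (N + 2) := ⟨N, by omega⟩
/-- The last index. -/
def pb (N : ℕ) : Fin (N + 2) := ⟨N + 1, by omega⟩

/-- Evaluation of an exponent vector at a coordinate. -/
def evl {a : ℕ} (j : Fin a) : (Fin a → ℤ) →+ ℤ := Pi.evalAddMonoidHom (fun _ => ℤ) j

lemma evl_apply {a : ℕ} (j : Fin a) (m : Fin a → ℤ) : evl j m = m j := rfl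

/-- Exponent map of the substitution `x_j ↦ x_i⁻¹`. -/
def tauExp {a : ℕ} (i j : Fin a) : (Fin a → ℤ) →+ (Fin a → ℤ) :=
  projExp (evl j) (Pi.single i 1 + Pi.single j 1)

/-- Exponent map of the substitution `x_i, x_j ↦ 1`. -/
def zExp {a : ℕ} (i j : Fin a) : (Fin a → ℤ) →+ (Fin a → ℤ) :=
  AddMonoidHom.mk' (fun m l => if l = i ∨ l = j then 0 else m l) (fun x y => by
    funext l; simp only [Pi.add_apply]; split_ifs <;> simp)

/-- Exponent map of the inclusion of the first `N` variables. -/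
def iotaExp (N : ℕ) : (Fin N → ℤ) →+ (Fin (N + 2) → ℤ) :=
  AddMonoidHom.mk' (fun m l => if h : (l : ℕ) < N then m ⟨l, h⟩ else 0) (fun x y => by
    funext l; simp only [Pi.add_apply]; split_ifs <;> simp)

/-- Exponent map of `ds`. -/
def resE (N : ℕ) : (Fin (N + 2) → ℤ) →+ (Fin N → ℤ) :=
  AddMonoidHom.mk' (fun m i => m (Fin.castAdd 2 i)) (fun _ _ => rfl)

lemma tauExp_apply {a : ℕ} {i j : Fin a} (hij : i ≠ j) (m : Fin a → ℤ) (l : Fin a) :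
    tauExp i j m l = if l = j then 0 else if l = i then m i - m j else m l := by
  simp only [tauExp, projExp_apply, evl_apply, Pi.sub_apply, Pi.smul_apply, Pi.add_apply,
    Pi.single_apply, smul_eq_mul]
  split_ifs <;> simp_all

lemma zExp_apply {a : ℕ} (i j : Fin a) (m : Fin a → ℤ) (l : Fin a) :
    zExp i j m l = if l = i ∨ l = j then 0 else m l := rfl

lemma iotaExp_apply (N : ℕ) (m : Fin N → ℤ) (l : Fin (N + 2)) :
    iotaExp N m l = if h : (l : ℕ) < N then m ⟨l, h⟩ else 0 := rfl

lemma resE_apply (N : ℕ) (m : Fin (N + 2) → ℤ) (l : Fin N) :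
    resE N m l = m (Fin.castAdd 2 l) := rfl

lemma pa_ne_pb (N : ℕ) : pa N ≠ pb N := by simp [pa, pb]

/-- `ds` with better types. -/
abbrev dsR (N : ℕ) : R (N + 2) →+* R N := Subst (resE N)

lemma ds_eq (N : ℕ) (f : R (N + 2)) : ds (N + 2) f = dsR N f := rfl

/-- Auxiliary embedding. -/
def embE (N : ℕ) : ((Fin N → ℤ) × ℤ) →+ (Fin (N + 2) → ℤ) :=
  AddMonoidHom.mk' (fun p l => if h : (l : ℕ) < N then p.1 ⟨l, h⟩ else
    if (l : ℕ) = N then p.2 else 0) (fun x y => by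
    funext l; simp only [Pi.add_apply, Prod.fst_add, Prod.snd_add]; split_ifs <;> simp)

lemma embE_inj (N : ℕ) : Function.Injective (embE N) := by
  rintro ⟨v, s⟩ ⟨v', s'⟩ h
  have h' : ∀ l, embE N (v, s) l = embE N (v', s') l := fun l => by rw [h]
  refine Prod.ext (funext fun i => ?_) ?_
  · have := h' (Fin.castAdd 2 i)
    simpa [embE] using this
  · have := h' (pa N)
    simpa [embE, pa] using this

lemma NoT_iff (N : ℕ) (f : R (N + 2)) :
    NoT (N + 2) (ev (N + 2) f) ↔
      Subst (tauExp (pa N) (pb N)) f = Subst (iotaExp N) (dsR N f) := by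
  have e1 : AddMonoidAlgebra.mapDomainRingHom ℤ (embE N) (ev (N + 2) f)
      = Subst (tauExp (pa N) (pb N)) f := by
    unfold ev Subst
    change ((AddMonoidAlgebra.mapDomainRingHom ℤ (embE N)).comp
      (AddMonoidAlgebra.mapDomainRingHom ℤ (evExp (N + 2)))) f = _
    rw [← AddMonoidAlgebra.mapDomainRingHom_comp]
    refine congrArg (fun φ => AddMonoidAlgebra.mapDomainRingHom ℤ φ f) ?_
    refine AddMonoidHom.ext fun m => funext fun l => ?_
    rw [tauExp_apply (pa_ne_pb N)]
    change (if h : (l : ℕ) < N then m (Fin.castLE _ ⟨l, h⟩) else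
      if (l : ℕ) = N then (if h : 2 ≤ N + 2 then m ⟨N + 2 - 2, by omega⟩ - m ⟨N + 2 - 1, by omega⟩
        else 0) else 0) = _
    have := l.2
    simp only [Fin.ext_iff, pa, pb]
    split_ifs <;> first | omega | rfl
  have e2 : ∀ g : R N, AddMonoidAlgebra.mapDomainRingHom ℤ (embE N)
      (AddMonoidAlgebra.mapDomainRingHom ℤ (AddMonoidHom.inl (Fin N → ℤ) ℤ) g)
      = Subst (iotaExp N) g := by
    intro g
    unfold Subst
    change ((AddMonoidAlgebra.mapDomainRingHom ℤ (embE N)).comp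
      (AddMonoidAlgebra.mapDomainRingHom ℤ (AddMonoidHom.inl (Fin N → ℤ) ℤ))) g = _
    rw [← AddMonoidAlgebra.mapDomainRingHom_comp]
    refine congrArg (fun φ => AddMonoidAlgebra.mapDomainRingHom ℤ φ g) ?_
    refine AddMonoidHom.ext fun m => funext fun l => ?_
    simp [embE, iotaExp_apply]
  have e3 : AddMonoidAlgebra.mapDomainRingHom ℤ (AddMonoidHom.fst (Fin N → ℤ) ℤ) (ev (N + 2) f)
      = dsR N f := by
    unfold ev dsR Subst
    change ((AddMonoidAlgebra.mapDomainRingHom ℤ (AddMonoidHom.fst (Fin N → ℤ) ℤ)).comp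
      (AddMonoidAlgebra.mapDomainRingHom ℤ (evExp (N + 2)))) f = _
    rw [← AddMonoidAlgebra.mapDomainRingHom_comp]
    rfl
  have e4 : ∀ g : R N, AddMonoidAlgebra.mapDomainRingHom ℤ (AddMonoidHom.fst (Fin N → ℤ) ℤ)
      (AddMonoidAlgebra.mapDomainRingHom ℤ (AddMonoidHom.inl (Fin N → ℤ) ℤ) g) = g := by
    intro g
    change ((AddMonoidAlgebra.mapDomainRingHom ℤ (AddMonoidHom.fst (Fin N → ℤ) ℤ)).comp
      (AddMonoidAlgebra.mapDomainRingHom ℤ (AddMonoidHom.inl (Fin N → ℤ) ℤ))) g = _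
    rw [← AddMonoidAlgebra.mapDomainRingHom_comp, AddMonoidHom.fst_comp_inl,
      AddMonoidAlgebra.mapDomainRingHom_id]
    rfl
  constructor
  · rintro ⟨g, hg⟩
    have h3 := e3
    rw [← hg] at h3
    have h4 : g = dsR N f := (e4 g).symm.trans h3
    rw [← e1, ← hg, ← h4]
    exact e2 g
  · intro h
    refine ⟨dsR N f, ?_⟩
    apply AddMonoidAlgebra.mapDomain_injective (embE_inj N)
    exact (e2 _).trans (h.symm.trans e1.symm)

lemma mem_J_iff (N : ℕ) (f : R (N + 2)) :
    f ∈ J (N + 2) ↔ SymmP f ∧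
      Subst (tauExp (pa N) (pb N)) f = Subst (iotaExp N) (dsR N f) := by
  rw [← NoT_iff]
  simp [J]

lemma iota_ds (N : ℕ) (f : R (N + 2)) :
    Subst (iotaExp N) (dsR N f) = Subst (zExp (pa N) (pb N)) f := by
  rw [Subst_Subst]
  refine Subst_congr (fun m => funext fun l => ?_) f
  simp only [AddMonoidHom.comp_apply, iotaExp_apply, resE_apply, zExp_apply, pa, pb, Fin.ext_iff]
  have := l.2
  split_ifs <;> first | rfl | omega

lemma ds_iota (N : ℕ) (f : R N) : dsR N (Subst (iotaExp N) f) = f := by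
  rw [Subst_Subst]
  conv_rhs => rw [← RingHom.id_apply f, ← AddMonoidAlgebra.mapDomainRingHom_id]
  refine Subst_congr (ψ := AddMonoidHom.id _) (fun m => funext fun l => ?_) f
  simp [AddMonoidHom.comp_apply, iotaExp_apply, resE_apply]

lemma ds_tau (N : ℕ) (f : R (N + 2)) : dsR N (Subst (tauExp (pa N) (pb N)) f) = dsR N f := by
  rw [Subst_Subst]
  refine Subst_congr (fun m => funext fun l => ?_) f
  have := l.2
  have h1 : Fin.castAdd 2 l ≠ pa N := by simp [pa, Fin.ext_iff]; omega
  have h2 : Fin.castAdd 2 l ≠ pb N := by simp [pb, Fin.ext_iff]; omega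
  simp only [AddMonoidHom.comp_apply, resE_apply, tauExp_apply (pa_ne_pb N), h1, h2, if_false]

/-- If the substitution lands in the subring, then `f` is in `J`. -/
lemma mem_J_of (N : ℕ) (f : R (N + 2)) (g : R N) (hs : SymmP f)
    (h : Subst (tauExp (pa N) (pb N)) f = Subst (iotaExp N) g) :
    f ∈ J (N + 2) ∧ dsR N f = g := by
  have h1 : dsR N f = g := by rw [← ds_tau, h, ds_iota]
  exact ⟨(mem_J_iff N f).2 ⟨hs, by rw [h1, h]⟩, h1⟩

lemma perm_tau {a : ℕ} (w : Equiv.Perm (Fin a)) {i j : Fin a} (hij : i ≠ j) (f : R a) :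
    Subst (tauExp (w i) (w j)) (permHom w f) = permHom w (Subst (tauExp i j) f) := by
  refine Subst_comm (fun m => funext fun l => ?_) f
  simp only [permExp_apply, tauExp_apply hij, tauExp_apply (w.injective.ne hij),
    Equiv.symm_apply_eq, Equiv.symm_apply_apply]

lemma perm_z {a : ℕ} (w : Equiv.Perm (Fin a)) {i j : Fin a} (f : R a) :
    Subst (zExp (w i) (w j)) (permHom w f) = permHom w (Subst (zExp i j) f) := by
  refine Subst_comm (fun m => funext fun l => ?_) f
  simp only [permExp_apply, zExp_apply, Equiv.symm_apply_eq]

lemma exists_perm {a : ℕ} {i j k l : Fin a} (hij : i ≠ j) (hkl : k ≠ l) :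
    ∃ w : Equiv.Perm (Fin a), w i = k ∧ w j = l := by
  refine ⟨Equiv.swap (Equiv.swap i k j) l * Equiv.swap i k, ?_, ?_⟩
  · rw [Equiv.Perm.mul_apply, Equiv.swap_apply_left, Equiv.swap_apply_of_ne_of_ne _ hkl]
    intro h
    have : Equiv.swap i k i = Equiv.swap i k j := by rw [Equiv.swap_apply_left]; exact h
    exact hij ((Equiv.swap i k).injective this)
  · rw [Equiv.Perm.mul_apply, Equiv.swap_apply_left]

lemma J_all {N : ℕ} {f : R (N + 2)} (hf : f ∈ J (N + 2)) {i j : Fin (N + 2)} (hij : i ≠ j) :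
    Subst (tauExp i j) f = Subst (zExp i j) f := by
  obtain ⟨hs, h⟩ := (mem_J_iff N f).1 hf
  obtain ⟨w, rfl, rfl⟩ := exists_perm (pa_ne_pb N) hij
  have h1 := perm_tau w (pa_ne_pb N) f
  have h2 := perm_z w (i := pa N) (j := pb N) f
  rw [hs w] at h1 h2
  rw [h1, h2, h, iota_ds]

/-- Extend a permutation by fixing the last two indices. -/
def ext2 {N : ℕ} (w : Equiv.Perm (Fin N)) : Equiv.Perm (Fin (N + 2)) :=
  finSumFinEquiv.permCongr (Equiv.Perm.sumCongr w 1)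

lemma ext2_castAdd {N : ℕ} (w : Equiv.Perm (Fin N)) (i : Fin N) :
    ext2 w (Fin.castAdd 2 i) = Fin.castAdd 2 (w i) := by
  simp [ext2, Equiv.permCongr_apply]

lemma ext2_natAdd {N : ℕ} (w : Equiv.Perm (Fin N)) (i : Fin 2) :
    ext2 w (Fin.natAdd N i) = Fin.natAdd N i := by
  simp [ext2, Equiv.permCongr_apply]

lemma ext2_pa {N : ℕ} (w : Equiv.Perm (Fin N)) : ext2 w (pa N) = pa N := ext2_natAdd w 0
lemma ext2_pb {N : ℕ} (w : Equiv.Perm (Fin N)) : ext2 w (pb N) = pb N := ext2_natAdd w 1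

lemma sign_ext2 {N : ℕ} (w : Equiv.Perm (Fin N)) :
    Equiv.Perm.sign (ext2 w) = Equiv.Perm.sign w := by
  simp [ext2, Equiv.Perm.sign_permCongr, Equiv.Perm.sign_sumCongr]

lemma ds_ext2 {N : ℕ} (w : Equiv.Perm (Fin N)) (f : R (N + 2)) :
    permHom w (dsR N f) = dsR N (permHom (ext2 w) f) := by
  refine Subst_comm (fun m => funext fun l => ?_) f
  simp only [permExp_apply, resE_apply]
  congr 1
  rw [Equiv.eq_symm_apply, ext2_castAdd, Equiv.apply_symm_apply]

lemma iota_ext2 {N : ℕ} (w : Equiv.Perm (Fin N)) (f : R N) :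
    Subst (iotaExp N) (permHom w f) = permHom (ext2 w) (Subst (iotaExp N) f) := by
  refine Subst_comm (fun m => funext fun l => ?_) f
  simp only [permExp_apply, iotaExp_apply]
  obtain ⟨l, rfl⟩ := (ext2 w).surjective l
  rw [Equiv.symm_apply_apply]
  induction l using Fin.addCases with
  | left i => rw [ext2_castAdd]; simp
  | right i => rw [ext2_natAdd]; simp

lemma tau_ext2 {N : ℕ} (w : Equiv.Perm (Fin N)) (f : R (N + 2)) :
    Subst (tauExp (pa N) (pb N)) (permHom (ext2 w) f)
      = permHom (ext2 w) (Subst (tauExp (pa N) (pb N)) f) := by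
  have := perm_tau (ext2 w) (pa_ne_pb N) f
  rwa [ext2_pa, ext2_pb] at this

lemma J_symm {N : ℕ} {f : R N} (hf : f ∈ J N) : SymmP f := hf.1

lemma ds_symm {N : ℕ} {f : R (N + 2)} (hf : SymmP f) : SymmP (dsR N f) := fun w => by
  rw [ds_ext2, hf]

lemma ds_mem_J {N : ℕ} {f : R (N + 2)} (hf : f ∈ J (N + 2)) : dsR N f ∈ J N := by
  match N, f, hf with
  | 0, f, hf => exact ⟨ds_symm hf.1, by omega⟩
  | 1, f, hf => exact ⟨ds_symm hf.1, by omega⟩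
  | N + 2, f, hf =>
    have hne : Fin.castAdd 2 (pa N) ≠ Fin.castAdd 2 (pb N) := by simp [pa, pb]
    have h := congrArg (dsR (N + 2)) (J_all hf hne)
    refine (mem_J_iff N _).2 ⟨ds_symm hf.1, ?_⟩
    rw [iota_ds]
    have h1 : Subst (tauExp (pa N) (pb N)) (dsR (N + 2) f)
        = dsR (N + 2) (Subst (tauExp (Fin.castAdd 2 (pa N)) (Fin.castAdd 2 (pb N))) f) := by
      refine Subst_comm (fun m => funext fun l => ?_) f
      simp only [resE_apply, tauExp_apply hne, tauExp_apply (pa_ne_pb N), Fin.castAdd_inj]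
    have h2 : Subst (zExp (pa N) (pb N)) (dsR (N + 2) f)
        = dsR (N + 2) (Subst (zExp (Fin.castAdd 2 (pa N)) (Fin.castAdd 2 (pb N))) f) := by
      refine Subst_comm (fun m => funext fun l => ?_) f
      simp only [resE_apply, zExp_apply, Fin.castAdd_inj]
    rw [h1, h2, h]

lemma J_zero (N : ℕ) : (0 : R N) ∈ J N :=
  ⟨fun w => map_zero _, fun _ => ⟨0, by simp⟩⟩

lemma J_add {N : ℕ} {f g : R N} (hf : f ∈ J N) (hg : g ∈ J N) : f + g ∈ J N :=
  ⟨fun w => by rw [map_add, hf.1, hg.1], fun h => by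
    obtain ⟨a, ha⟩ := hf.2 h
    obtain ⟨b, hb⟩ := hg.2 h
    exact ⟨a + b, by rw [map_add, map_add, ha, hb]⟩⟩

lemma J_neg {N : ℕ} {f : R N} (hf : f ∈ J N) : -f ∈ J N :=
  ⟨fun w => by rw [map_neg, hf.1], fun h => by
    obtain ⟨a, ha⟩ := hf.2 h
    exact ⟨-a, by rw [map_neg, map_neg, ha]⟩⟩

lemma J_int {N : ℕ} (c : ℤ) : (c : R N) ∈ J N :=
  ⟨fun w => map_intCast _ c, fun _ => ⟨c, by rw [map_intCast, map_intCast]⟩⟩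


/-! ### The product `P` and the kernel of `ds` -/

/-- Ordered pairs. -/
def prs (a : ℕ) : Finset (Fin a × Fin a) :=
  Finset.univ.filter (fun p : Fin a × Fin a => p.1 < p.2)

lemma mem_prs {a : ℕ} {p : Fin a × Fin a} : p ∈ prs a ↔ p.1 < p.2 := by simp [prs]

lemma prod_prs {a : ℕ} {M : Type*} [CommMonoid M] (f : Fin a → Fin a → M) :
    ∏ p ∈ prs a, f p.1 p.2 = ∏ i, ∏ j ∈ Finset.Ioi i, f i j := by
  rw [Finset.prod_sigma']
  refine Finset.prod_bij' (fun p _ => ⟨p.1, p.2⟩) (fun p _ => (p.1, p.2)) ?_ ?_ ?_ ?_ ?_ <;>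
    simp [mem_prs]

lemma P_eq_mon (a : ℕ) :
    P a = ∏ p ∈ prs a, (1 - mon (Pi.single p.1 1 + Pi.single p.2 1)) := by
  unfold P prs
  refine Finset.prod_congr rfl fun p _ => ?_
  rw [mon_add]; rfl

lemma P_symm (a : ℕ) : SymmP (P a) := by
  intro w
  unfold P
  rw [map_prod]
  refine Finset.prod_bij'
    (fun p _ => if w p.1 < w p.2 then (w p.1, w p.2) else (w p.2, w p.1))
    (fun p _ => if w.symm p.1 < w.symm p.2 then (w.symm p.1, w.symm p.2)
      else (w.symm p.2, w.symm p.1)) ?_ ?_ ?_ ?_ ?_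
  · rintro ⟨i, j⟩ h
    simp only [Finset.mem_filter, Finset.mem_univ, true_and] at h ⊢
    have : w i ≠ w j := w.injective.ne h.ne
    split_ifs with h'
    · exact h'
    · exact lt_of_le_of_ne (not_lt.1 h') this.symm
  · rintro ⟨i, j⟩ h
    simp only [Finset.mem_filter, Finset.mem_univ, true_and] at h ⊢
    have : w.symm i ≠ w.symm j := w.symm.injective.ne h.ne
    split_ifs with h'
    · exact h'
    · exact lt_of_le_of_ne (not_lt.1 h') this.symm
  · rintro ⟨i, j⟩ h
    simp only [Finset.mem_filter, Finset.mem_univ, true_and] at h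
    by_cases h' : w i < w j
    · simp [h', h]
    · simp [h', h.not_gt]
  · rintro ⟨i, j⟩ h
    simp only [Finset.mem_filter, Finset.mem_univ, true_and] at h
    by_cases h' : w.symm i < w.symm j
    · simp [h', h]
    · simp [h', h.not_gt]
  · rintro ⟨i, j⟩ h
    simp only [map_sub, map_one, map_mul, permHom_X]
    split_ifs
    · rfl
    · rw [mul_comm]

lemma pair_sum_ne {a : ℕ} {p q : Fin a × Fin a} (hp : p.1 < p.2) (hq : q.1 < q.2) (hpq : p ≠ q)
    (c : ℤ) : c • (Pi.single p.1 (1 : ℤ) + Pi.single p.2 1 : Fin a → ℤ)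
      ≠ Pi.single q.1 1 + Pi.single q.2 1 := by
  intro h
  obtain ⟨i, j⟩ := p
  obtain ⟨k, l⟩ := q
  simp only at hp hq h
  have hk := congrFun h k
  have hl := congrFun h l
  simp only [Pi.smul_apply, Pi.add_apply, Pi.single_apply, smul_eq_mul,
    if_neg hq.ne, if_neg hq.ne'] at hk hl
  have h1 : k = i ∨ k = j := by
    by_contra! hc
    simp [hc.1, hc.2] at hk
  have h2 : l = i ∨ l = j := by
    by_contra! hc
    simp [hc.1, hc.2] at hl
  apply hpq
  rcases h1 with rfl | rfl <;> rcases h2 with rfl | rfl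
  · exact absurd hq (lt_irrefl _)
  · rfl
  · exact absurd hq hp.not_gt
  · exact absurd hq (lt_irrefl _)

lemma P_ne_zero (a : ℕ) : P a ≠ 0 := by
  rw [P_eq_mon, Finset.prod_ne_zero_iff]
  intro p hp h
  rw [mem_prs] at hp
  rw [sub_eq_zero, ← mon_zero, mon_inj] at h
  have := congrFun h p.1
  simp [hp.ne] at this

lemma symm_of_mul {a : ℕ} {f g : R a} (hf : SymmP f) (hf0 : f ≠ 0) (h : SymmP (f * g)) :
    SymmP g := by
  intro w
  have := h w
  rw [map_mul, hf w] at this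
  exact mul_left_cancel₀ hf0 this

lemma ker_ds {N : ℕ} {h : R (N + 2)} (hh : h ∈ J (N + 2)) (h0 : dsR N h = 0) :
    ∃ g, SymmP g ∧ h = P (N + 2) * g := by
  have hd : P (N + 2) ∣ h := by
    rw [P_eq_mon]
    refine prod_dvd_of_proj (prs (N + 2)) (fun p => evl p.2)
      (fun p => Pi.single p.1 1 + Pi.single p.2 1) ?_ ?_ h ?_
    · intro p hp
      rw [mem_prs] at hp
      simp [evl_apply, hp.ne']
    · intro p hp q hq hpq
      exact pair_sum_ne (mem_prs.1 hp) (mem_prs.1 hq) hpq _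
    · intro p hp
      rw [mem_prs] at hp
      obtain ⟨hs, ht⟩ := (mem_J_iff N h).1 hh
      obtain ⟨w, h1, h2⟩ := exists_perm (pa_ne_pb N) hp.ne
      have := perm_tau w (pa_ne_pb N) h
      rw [hs w, ht, h0, map_zero, map_zero, h1, h2] at this
      exact this
  obtain ⟨g, rfl⟩ := hd
  exact ⟨g, symm_of_mul (P_symm _) (P_ne_zero _) hh.1, rfl⟩

/-! ### Vandermonde products -/

/-- The Vandermonde determinant. -/
def D (a : ℕ) : R a := (Matrix.vandermonde (X : Fin a → R a)).det

lemma D_prod (a : ℕ) : D a = ∏ i : Fin a, ∏ j ∈ Finset.Ioi i, (X j - X i) :=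
  Matrix.det_vandermonde _

lemma hom_D {a b : ℕ} (φ : R a →+* R b) :
    φ (D a) = (Matrix.vandermonde (fun i => φ (X i))).det := by
  unfold D
  rw [RingHom.map_det]
  congr 1
  ext i j
  simp [Matrix.vandermonde]

lemma perm_D {a : ℕ} (w : Equiv.Perm (Fin a)) :
    permHom w (D a) = ((Equiv.Perm.sign w : ℤ) : R a) * D a := by
  rw [hom_D]
  simp only [permHom_X]
  unfold D
  rw [← Matrix.det_permute]
  rfl

lemma X_inj {a : ℕ} {i j : Fin a} (h : X i = X j) : i = j := by
  rw [X_eq, X_eq, mon_inj] at h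
  by_contra hne
  have := congrFun h i
  simp [hne] at this

lemma D_ne_zero (a : ℕ) : D a ≠ 0 := by
  unfold D
  rw [Matrix.det_vandermonde_ne_zero_iff]
  exact fun i j h => X_inj h

lemma tau_D_ne_zero (N : ℕ) : Subst (tauExp (pa N) (pb N)) (D (N + 2)) ≠ 0 := by
  rw [hom_D, Matrix.det_vandermonde_ne_zero_iff]
  intro i j h
  simp only [X_eq, Subst_mon, mon_inj] at h
  by_contra hne
  have h1 := congrFun h i
  have h2 := congrFun h j
  have h3 := congrFun h (pa N)
  simp only [tauExp_apply (pa_ne_pb N), Pi.single_apply] at h1 h2 h3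
  have := pa_ne_pb N
  by_cases e1 : i = pb N <;> by_cases e2 : j = pb N <;> by_cases e3 : i = pa N <;>
    by_cases e4 : j = pa N <;> simp_all [eq_comm]

lemma antisymm_dvd {a : ℕ} (f : R a)
    (hf : ∀ w : Equiv.Perm (Fin a), permHom w f = ((Equiv.Perm.sign w : ℤ) : R a) * f) :
    D a ∣ f := by
  have hD : D a = (∏ p ∈ prs a, (- X p.1)) *
      ∏ p ∈ prs a, (1 - mon (Pi.single p.2 1 - Pi.single p.1 1)) := by
    rw [D_prod, ← prod_prs (fun i j => X j - X i), ← Finset.prod_mul_distrib]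
    refine Finset.prod_congr rfl fun p _ => ?_
    have : mon (Pi.single p.2 1) = mon (Pi.single p.1 1) *
        mon (Pi.single p.2 1 - Pi.single p.1 1 : Fin a → ℤ) := by
      rw [← mon_add]; congr 1; abel
    rw [X_eq, X_eq]
    linear_combination this
  have hu : IsUnit (∏ p ∈ prs a, (- X p.1) : R a) := by
    rw [IsUnit.prod_iff]
    exact fun p _ => (mon_isUnit _).neg
  rw [hD, hu.mul_left_dvd]
  refine prod_dvd_of_proj (prs a) (fun p => evl p.2)
      (fun p => Pi.single p.2 1 - Pi.single p.1 1) ?_ ?_ f ?_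
  · intro p hp
    rw [mem_prs] at hp
    simp [evl_apply, hp.ne']
  · rintro ⟨i, j⟩ hp ⟨k, l⟩ hq hpq h
    rw [mem_prs] at hp hq
    simp only at hp hq h
    have hk := congrFun h k
    have hl := congrFun h l
    simp only [Pi.smul_apply, Pi.sub_apply, Pi.single_apply, smul_eq_mul,
      if_neg hq.ne, if_neg hq.ne'] at hk hl
    have h1 : k = i ∨ k = j := by
      by_contra! hc
      simp [hc.1, hc.2] at hk
    have h2 : l = i ∨ l = j := by
      by_contra! hc
      simp [hc.1, hc.2] at hl
    apply hpq
    rcases h1 with rfl | rfl <;> rcases h2 with rfl | rfl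
    · exact absurd hq (lt_irrefl _)
    · rfl
    · exact absurd hq hp.not_gt
    · exact absurd hq (lt_irrefl _)
  · rintro ⟨i, j⟩ hp
    rw [mem_prs] at hp
    simp only at hp ⊢
    set φ := projExp (evl j) (Pi.single j 1 - Pi.single i 1) with hφ
    have h1 : Subst φ (permHom (Equiv.swap i j) f) = Subst φ f := by
      rw [permHom_eq, Subst_Subst]
      refine Subst_congr (fun m => funext fun l => ?_) f
      simp only [hφ, AddMonoidHom.comp_apply, projExp_apply, evl_apply, permExp_apply,
        Pi.sub_apply, Pi.smul_apply, Pi.single_apply, smul_eq_mul, Equiv.symm_swap,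
        Equiv.swap_apply_right]
      by_cases e1 : l = i
      · subst e1; simp [hp.ne, add_comm]
      · by_cases e2 : l = j
        · subst e2; simp [hp.ne']
        · simp [e1, e2, Equiv.swap_apply_of_ne_of_ne e1 e2]
    rw [hf, Equiv.Perm.sign_swap hp.ne] at h1
    simp only [Units.val_neg, Units.val_one, Int.cast_neg, Int.cast_one, neg_mul, one_mul,
      map_neg] at h1
    have h2 : (2 : R a) * Subst φ f = 0 := by linear_combination -h1
    refine (mul_eq_zero.1 h2).resolve_left ?_
    intro h3
    have h4 := congrArg (fun g : R a => g.coeff 0) h3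
    simp [← one_add_one_eq_two, AddMonoidAlgebra.one_def] at h4


/-! ### Adding a variable at the front -/

/-- Exponent map of `x_j ↦ x_{j+1}`. -/
def e0Exp (N : ℕ) : (Fin N → ℤ) →+ (Fin (N + 1) → ℤ) :=
  AddMonoidHom.mk' (fun m => Fin.cons 0 m) (fun x y => by
    funext l
    refine Fin.cases ?_ (fun i => ?_) l <;> simp)

lemma e0Exp_zero (N : ℕ) (m : Fin N → ℤ) : e0Exp N m 0 = 0 := rfl
lemma e0Exp_succ (N : ℕ) (m : Fin N → ℤ) (i : Fin N) : e0Exp N m i.succ = m i := rfl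

/-- The substitution `x_j ↦ x_{j+1}`. -/
abbrev E0 (N : ℕ) : R N →+* R (N + 1) := Subst (e0Exp N)

lemma e0Exp_single (N : ℕ) (j : Fin N) (k : ℤ) :
    e0Exp N (Pi.single j k) = Pi.single j.succ k := by
  funext l
  refine Fin.cases ?_ (fun i => ?_) l
  · rw [e0Exp_zero, Pi.single_apply, if_neg (Fin.succ_ne_zero j).symm]
  · rw [e0Exp_succ]; simp [Pi.single_apply]

lemma E0_X (N : ℕ) (j : Fin N) : E0 N (X j) = X j.succ := by
  rw [X_eq, Subst_mon, e0Exp_single]; rfl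

/-- Extend a permutation by fixing `0`. -/
def ext1 {N : ℕ} (u : Equiv.Perm (Fin N)) : Equiv.Perm (Fin (N + 1)) :=
  Equiv.Perm.decomposeFin.symm (0, u)

lemma ext1_zero {N : ℕ} (u : Equiv.Perm (Fin N)) : ext1 u 0 = 0 := by simp [ext1]

lemma ext1_succ {N : ℕ} (u : Equiv.Perm (Fin N)) (i : Fin N) : ext1 u i.succ = (u i).succ := by
  simp [ext1]

lemma sign_ext1 {N : ℕ} (u : Equiv.Perm (Fin N)) :
    Equiv.Perm.sign (ext1 u) = Equiv.Perm.sign u := by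
  simp [ext1, Equiv.Perm.decomposeFin.symm_sign]

lemma exists_ext1 {N : ℕ} (w : Equiv.Perm (Fin (N + 1))) (hw : w 0 = 0) : ∃ u, w = ext1 u := by
  obtain ⟨⟨p, u⟩, rfl⟩ := Equiv.Perm.decomposeFin.symm.surjective w
  have : p = 0 := by simpa using hw
  subst this
  exact ⟨u, rfl⟩

lemma E0_perm {N : ℕ} (u : Equiv.Perm (Fin N)) (f : R N) :
    permHom (ext1 u) (E0 N f) = E0 N (permHom u f) := by
  refine Subst_comm (fun m => funext fun l => ?_) f
  obtain ⟨l, rfl⟩ := (ext1 u).surjective l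
  rw [permExp_apply, Equiv.symm_apply_apply]
  refine Fin.cases ?_ (fun i => ?_) l
  · rw [ext1_zero]; rfl
  · rw [ext1_succ, e0Exp_succ, e0Exp_succ, permExp_apply, Equiv.symm_apply_apply]

/-- `∏_{j>0} (1 - x_0 x_j)`. -/
def Q (N : ℕ) : R (N + 1) := ∏ j : Fin N, (1 - X 0 * X j.succ)

/-- `∏_{j>0} (x_j - x_0)`. -/
def Y (N : ℕ) : R (N + 1) := ∏ j : Fin N, (X j.succ - X 0)

lemma D_succ (N : ℕ) : D (N + 1) = Y N * E0 N (D N) := by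
  rw [D_prod, Fin.prod_univ_succ, Fin.prod_Ioi_zero, D_prod, map_prod]
  congr 1
  refine Finset.prod_congr rfl fun i _ => ?_
  rw [Fin.prod_Ioi_succ, map_prod]
  simp only [map_sub, E0_X]

lemma P_prod (a : ℕ) : P a = ∏ i : Fin a, ∏ j ∈ Finset.Ioi i, (1 - X i * X j) :=
  prod_prs (fun i j => 1 - X i * X j)

lemma P_succ (N : ℕ) : P (N + 1) = Q N * E0 N (P N) := by
  rw [P_prod, Fin.prod_univ_succ, Fin.prod_Ioi_zero, P_prod, map_prod]
  congr 1
  refine Finset.prod_congr rfl fun i _ => ?_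
  rw [Fin.prod_Ioi_succ, map_prod]
  simp only [map_sub, map_one, map_mul, E0_X]

/-- The seed of the induction operator. -/
def T0 (N : ℕ) (F : R (N + 1)) : R (N + 1) := F * (Q N * E0 N (D N))

/-- The sign of a permutation, as an element of `R`. -/
def sg {a : ℕ} (b : ℕ) (w : Equiv.Perm (Fin a)) : R b := ((Equiv.Perm.sign w : ℤ) : R b)

lemma sg_mul {a : ℕ} (b : ℕ) (w v : Equiv.Perm (Fin a)) : sg b (w * v) = sg b w * sg b v := by
  simp [sg]

lemma sg_sq {a : ℕ} (b : ℕ) (w : Equiv.Perm (Fin a)) : sg b w * sg b w = 1 := by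
  unfold sg
  rw [← Int.cast_mul, ← Units.val_mul]
  simp

lemma hom_sg {a b c : ℕ} (φ : R b →+* R c) (w : Equiv.Perm (Fin a)) : φ (sg b w) = sg c w :=
  map_intCast φ _

/-- The `i`-th term. -/
def term (N : ℕ) (F : R (N + 1)) (i : Fin (N + 1)) : R (N + 1) :=
  sg (N + 1) (i.cycleRange.symm) * permHom i.cycleRange.symm (T0 N F)

/-- The numerator of the induction operator. -/
def NN (N : ℕ) (F : R (N + 1)) : R (N + 1) := ∑ i, term N F i

/-- `F` is symmetric in all variables except `x_0`. -/
def Symm0 {N : ℕ} (F : R (N + 1)) : Prop := ∀ u : Equiv.Perm (Fin N), permHom (ext1 u) F = F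

lemma T0_anti {N : ℕ} {F : R (N + 1)} (hF : Symm0 F) (u : Equiv.Perm (Fin N)) :
    permHom (ext1 u) (T0 N F) = sg (N + 1) (ext1 u) * T0 N F := by
  have hQ : permHom (ext1 u) (Q N) = Q N := by
    unfold Q
    rw [map_prod]
    simp only [map_sub, map_one, map_mul, permHom_X, ext1_zero, ext1_succ]
    exact Equiv.prod_comp u (fun j => (1 - X 0 * X j.succ : R (N + 1)))
  unfold T0
  rw [map_mul, map_mul, hF, hQ, E0_perm, perm_D, map_mul, map_intCast, sg, sign_ext1]
  ring

lemma term_eq {N : ℕ} {F : R (N + 1)} (hF : Symm0 F) (w : Equiv.Perm (Fin (N + 1)))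
    (i : Fin (N + 1)) (hw : w 0 = i) :
    sg (N + 1) w * permHom w (T0 N F) = term N F i := by
  set σ := i.cycleRange.symm with hσ
  obtain ⟨u, hu⟩ := exists_ext1 (σ⁻¹ * w) (by
    rw [Equiv.Perm.mul_apply, hw, Equiv.Perm.inv_eq_iff_eq, hσ, Fin.cycleRange_symm_zero])
  have hw' : w = σ * ext1 u := by rw [← hu]; simp
  rw [hw', permHom_mul, T0_anti hF, map_mul, hom_sg, sg_mul]
  unfold term
  rw [← hσ]
  linear_combination (sg (N + 1) σ * permHom σ (T0 N F)) * sg_sq (N + 1) (ext1 u)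

lemma NN_anti {N : ℕ} {F : R (N + 1)} (hF : Symm0 F) (w : Equiv.Perm (Fin (N + 1))) :
    permHom w (NN N F) = ((Equiv.Perm.sign w : ℤ) : R (N + 1)) * NN N F := by
  change _ = sg (N + 1) w * NN N F
  have h : ∀ i, permHom w (term N F i) = sg (N + 1) w * term N F (w i) := by
    intro i
    rw [← term_eq hF (w * i.cycleRange.symm) (w i) (by
      rw [Equiv.Perm.mul_apply, Fin.cycleRange_symm_zero]), permHom_mul, sg_mul]
    unfold term
    rw [map_mul, hom_sg]
    linear_combination (-sg (N + 1) i.cycleRange.symm *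
      permHom w (permHom i.cycleRange.symm (T0 N F))) * sg_sq (N + 1) w
  unfold NN
  rw [map_sum, Finset.sum_congr rfl (fun i _ => h i), ← Finset.mul_sum]
  rw [Equiv.sum_comp w (term N F)]

/-- Existence of the induced element. -/
lemma exists_ind {N : ℕ} {F : R (N + 1)} (hF : Symm0 F) :
    ∃ G, SymmP G ∧ D (N + 1) * G = NN N F := by
  obtain ⟨G, hG⟩ := antisymm_dvd (NN N F) (NN_anti hF)
  refine ⟨G, fun w => ?_, hG.symm⟩
  have h := NN_anti hF w
  rw [hG, map_mul, perm_D, ← mul_assoc] at h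
  refine mul_left_cancel₀ ?_ h
  refine mul_ne_zero ?_ (D_ne_zero _)
  intro h0
  have := sg_sq (N + 1) w
  rw [sg, h0] at this
  simp at this

lemma NN_sum {N : ℕ} {ι : Type*} (s : Finset ι) (F : ι → R (N + 1)) :
    NN N (∑ k ∈ s, F k) = ∑ k ∈ s, NN N (F k) := by
  unfold NN
  rw [Finset.sum_comm]
  refine Finset.sum_congr rfl fun i _ => ?_
  unfold term T0
  rw [Finset.sum_mul, map_sum, Finset.mul_sum]

/-- The factors `1 - x_i x_l` divide the `i`-th term. -/
lemma term_dvd {N : ℕ} (F : R (N + 1)) (i l : Fin (N + 1)) (hl : l ≠ i) :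
    (1 - X i * X l) ∣ term N F i := by
  obtain ⟨j, rfl⟩ := Fin.exists_succAbove_eq hl
  have h1 : (1 - X 0 * X j.succ : R (N + 1)) ∣ T0 N F := by
    unfold T0 Q
    exact Dvd.dvd.mul_left (Dvd.dvd.mul_right (Finset.dvd_prod_of_mem _ (Finset.mem_univ j)) _) _
  have h2 := map_dvd (permHom i.cycleRange.symm) h1
  rw [map_sub, map_one, map_mul, permHom_X, permHom_X, Fin.cycleRange_symm_zero,
    Fin.cycleRange_symm_succ] at h2
  exact Dvd.dvd.mul_left h2 _

lemma tau_one_sub (N : ℕ) :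
    Subst (tauExp (pa N) (pb N)) (1 - X (pa N) * X (pb N)) = 0 := by
  have h : evl (pb N) (Pi.single (pa N) 1 + Pi.single (pb N) 1) = 1 := by
    simp [evl_apply, (pa_ne_pb N).symm]
  have := proj_self h
  rwa [mon_add] at this

lemma tau_term_pa {N : ℕ} (F : R (N + 2)) :
    Subst (tauExp (pa N) (pb N)) (term (N + 1) F (pa N)) = 0 := by
  obtain ⟨g, hg⟩ := term_dvd F (pa N) (pb N) (pa_ne_pb N).symm
  rw [hg, map_mul, tau_one_sub, zero_mul]

lemma tau_term_pb {N : ℕ} (F : R (N + 2)) :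
    Subst (tauExp (pa N) (pb N)) (term (N + 1) F (pb N)) = 0 := by
  obtain ⟨g, hg⟩ := term_dvd F (pb N) (pa N) (pa_ne_pb N)
  rw [hg, map_mul, mul_comm (X (pb N)), tau_one_sub, zero_mul]


/-! ### Compatibility of the induction operator with `ds` -/

/-- The substitution `x_last ↦ x_{last-1}⁻¹`. -/
abbrev tau (N : ℕ) : R (N + 2) →+* R (N + 2) := Subst (tauExp (pa N) (pb N))
/-- The inclusion of the first `N` variables. -/
abbrev iota (N : ℕ) : R N →+* R (N + 2) := Subst (iotaExp N)

lemma iota_X (N : ℕ) (i : Fin N) : iota N (X i) = X (Fin.castAdd 2 i) := by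
  rw [X_eq, Subst_mon, X_eq, mon_inj]
  funext l
  rw [iotaExp_apply]
  split_ifs with h
  · simp [Pi.single_apply, Fin.ext_iff]
  · rw [Pi.single_apply, if_neg]
    rintro rfl
    exact h i.2

lemma tau_X_castAdd (N : ℕ) (i : Fin N) : tau N (X (Fin.castAdd 2 i)) = iota N (X i) := by
  rw [iota_X, X_eq, Subst_mon, mon_inj]
  have := i.2
  have h1 : Fin.castAdd 2 i ≠ pa N := by simp [pa, Fin.ext_iff]; omega
  have h2 : Fin.castAdd 2 i ≠ pb N := by simp [pb, Fin.ext_iff]; omega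
  funext l
  rw [tauExp_apply (pa_ne_pb N)]
  split_ifs with e1 e2
  · subst e1; simp [h2]
  · subst e2; simp [h1, h2]
  · rfl

lemma tau_pa_pb (N : ℕ) : tau N (X (pa N)) * tau N (X (pb N)) = 1 := by
  have := tau_one_sub N
  rw [map_sub, map_one, map_mul, sub_eq_zero] at this
  exact this.symm

lemma tau_Q_Y (N : ℕ) : tau (N + 1) (Q (N + 2)) * iota (N + 1) (Y N)
    = tau (N + 1) (Y (N + 2)) * iota (N + 1) (Q N) := by
  have e0 : (0 : Fin (N + 3)) = Fin.castAdd 2 (0 : Fin (N + 1)) := rfl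
  have e1 : ∀ j : Fin N, (Fin.castSucc (Fin.castSucc j)).succ = Fin.castAdd 2 j.succ :=
    fun j => rfl
  have e2 : (Fin.castSucc (Fin.last N)).succ = pa (N + 1) := rfl
  have e3 : (Fin.last (N + 1)).succ = pb (N + 1) := rfl
  have hQ : tau (N + 1) (Q (N + 2)) = iota (N + 1) (Q N)
      * (1 - iota (N + 1) (X 0) * tau (N + 1) (X (pa (N + 1))))
      * (1 - iota (N + 1) (X 0) * tau (N + 1) (X (pb (N + 1)))) := by
    unfold Q
    rw [Fin.prod_univ_castSucc, Fin.prod_univ_castSucc, map_mul, map_mul, map_prod, map_prod,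
      e2, e3]
    simp only [e0, e1, map_sub, map_mul, map_one, tau_X_castAdd]
  have hY : tau (N + 1) (Y (N + 2)) = iota (N + 1) (Y N)
      * (tau (N + 1) (X (pa (N + 1))) - iota (N + 1) (X 0))
      * (tau (N + 1) (X (pb (N + 1))) - iota (N + 1) (X 0)) := by
    unfold Y
    rw [Fin.prod_univ_castSucc, Fin.prod_univ_castSucc, map_mul, map_mul, map_prod, map_prod,
      e2, e3]
    simp only [e0, e1, map_sub, tau_X_castAdd]
  rw [hQ, hY]
  linear_combination (iota (N + 1) (Y N) * iota (N + 1) (Q N) * (iota (N + 1) (X 0) ^ 2 - 1))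
    * tau_pa_pb (N + 1)

lemma star {N : ℕ} {F : R (N + 3)} {F' : R (N + 1)} (h : tau (N + 1) F = iota (N + 1) F') :
    iota (N + 1) (D (N + 1)) * tau (N + 1) (T0 (N + 2) F)
      = tau (N + 1) (D (N + 3)) * iota (N + 1) (T0 N F') := by
  rw [D_succ N, D_succ (N + 2)]
  unfold T0
  simp only [map_mul]
  rw [h]
  linear_combination (iota (N + 1) F' * tau (N + 1) (E0 (N + 2) (D (N + 2)))
    * iota (N + 1) (E0 N (D N))) * tau_Q_Y N

lemma star_term {N : ℕ} {F : R (N + 3)} {F' : R (N + 1)} (hF : Symm0 F)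
    (h : tau (N + 1) F = iota (N + 1) F') (i : Fin (N + 1)) :
    iota (N + 1) (D (N + 1)) * tau (N + 1) (term (N + 2) F (Fin.castAdd 2 i))
      = tau (N + 1) (D (N + 3)) * iota (N + 1) (term N F' i) := by
  set w := i.cycleRange.symm with hw
  have hw0 : ext2 w 0 = Fin.castAdd 2 i := by
    have : (0 : Fin (N + 3)) = Fin.castAdd 2 (0 : Fin (N + 1)) := rfl
    rw [this, ext2_castAdd, hw, Fin.cycleRange_symm_zero]
  rw [← term_eq hF (ext2 w) _ hw0]
  have h1 := congrArg (permHom (ext2 w)) (star h)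
  rw [map_mul, map_mul, ← tau_ext2, ← tau_ext2, ← iota_ext2, ← iota_ext2, perm_D, perm_D,
    sign_ext2, map_mul, map_mul, map_intCast, map_intCast] at h1
  have hs : sg (N + 3) (ext2 w) = sg (N + 3) w := by unfold sg; rw [sign_ext2]
  unfold term
  rw [← hw, hs, map_mul, map_mul, hom_sg, hom_sg]
  unfold sg
  linear_combination h1

lemma tau_ind {N : ℕ} {F G : R (N + 3)} {F' G' : R (N + 1)} (hF : Symm0 F)
    (h : tau (N + 1) F = iota (N + 1) F') (hG : D (N + 3) * G = NN (N + 2) F)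
    (hG' : D (N + 1) * G' = NN N F') : tau (N + 1) G = iota (N + 1) G' := by
  have h0 : iota (N + 1) (D (N + 1)) ≠ 0 := by
    intro h0
    have := ds_iota (N + 1) (D (N + 1))
    rw [h0, map_zero] at this
    exact D_ne_zero _ this.symm
  refine mul_left_cancel₀ (mul_ne_zero h0 (tau_D_ne_zero (N + 1))) ?_
  have e1 := congrArg (tau (N + 1)) hG
  have e2 := congrArg (iota (N + 1)) hG'
  rw [map_mul] at e1 e2
  have e3 : iota (N + 1) (D (N + 1)) * tau (N + 1) (NN (N + 2) F)
      = tau (N + 1) (D (N + 3)) * iota (N + 1) (NN N F') := by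
    have hpa : tau (N + 1) (term (N + 2) F (Fin.castSucc (Fin.last (N + 1)))) = 0 :=
      tau_term_pa (N := N + 1) F
    have hpb : tau (N + 1) (term (N + 2) F (Fin.last (N + 2))) = 0 := tau_term_pb (N := N + 1) F
    unfold NN
    rw [Fin.sum_univ_castSucc, Fin.sum_univ_castSucc, map_add, map_add, hpa, hpb, add_zero,
      add_zero, map_sum, map_sum, Finset.mul_sum, Finset.mul_sum]
    exact Finset.sum_congr rfl fun i _ => star_term hF h i
  linear_combination iota (N + 1) (D (N + 1)) * e1 + e3 - tau (N + 1) (D (N + 3)) * e2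

/-! ### The induction operators on `J` -/

/-- `x_0^k f(x_1, …)`. -/
def seed {N : ℕ} (k : ℤ) (f : R N) : R (N + 1) := mon (Pi.single 0 k) * E0 N f

lemma seed_symm0 {N : ℕ} (k : ℤ) {f : R N} (hf : SymmP f) : Symm0 (seed k f) := by
  intro u
  unfold seed
  rw [map_mul, E0_perm, hf u, permHom_eq, Subst_mon, permExp_single, ext1_zero]

lemma mon_zero_tau {N : ℕ} (k : ℤ) :
    tau (N + 1) (mon (Pi.single 0 k)) = iota (N + 1) (mon (Pi.single 0 k)) := by
  rw [Subst_mon, Subst_mon, mon_inj]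
  funext l
  rw [tauExp_apply (pa_ne_pb _), iotaExp_apply]
  have := l.2
  simp only [Pi.single_apply, Fin.ext_iff, pa, pb, Fin.val_zero]
  split_ifs <;> first | rfl | omega

lemma tau_seed {N : ℕ} (k : ℤ) {f : R (N + 2)} (hf : f ∈ J (N + 2)) :
    tau (N + 1) (seed k f) = iota (N + 1) (seed k (dsR N f)) := by
  obtain ⟨_, ht⟩ := (mem_J_iff N f).1 hf
  unfold seed
  rw [map_mul, map_mul, mon_zero_tau]
  congr 1
  have h1 : tau (N + 1) (E0 (N + 2) f) = E0 (N + 2) (tau N f) := by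
    refine Subst_comm (fun m => funext fun l => ?_) f
    rw [tauExp_apply (pa_ne_pb _)]
    have ea : pa (N + 1) = (pa N).succ := rfl
    have eb : pb (N + 1) = (pb N).succ := rfl
    refine Fin.cases ?_ (fun i => ?_) l
    · rw [ea, eb, if_neg (Fin.succ_ne_zero _).symm, if_neg (Fin.succ_ne_zero _).symm]
      rfl
    · rw [e0Exp_succ, e0Exp_succ, tauExp_apply (pa_ne_pb _), ea, eb]
      simp only [Fin.succ_inj, e0Exp_succ]
  have h2 : iota (N + 1) (E0 N (dsR N f)) = E0 (N + 2) (iota N (dsR N f)) := by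
    refine Subst_comm (fun m => funext fun l => ?_) _
    refine Fin.cases ?_ (fun i => ?_) l
    · simp [iotaExp_apply, e0Exp_zero]
    · rw [e0Exp_succ, iotaExp_apply, iotaExp_apply]
      by_cases hi : (i : ℕ) < N
      · rw [dif_pos hi, dif_pos (by simpa using hi)]
        exact e0Exp_succ N m ⟨i, hi⟩
      · rw [dif_neg hi, dif_neg (by simpa using hi)]
  rw [h1, h2, ht]

lemma ind_J {N : ℕ} (k : ℤ) {f : R N} (hf : f ∈ J N) {G : R (N + 1)} (hs : SymmP G)
    (hG : D (N + 1) * G = NN N (seed k f)) : G ∈ J (N + 1) := by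
  match N, f, hf, G, hs, hG with
  | 0, f, hf, G, hs, hG => exact ⟨hs, by omega⟩
  | 1, f, hf, G, hs, hG =>
    refine (mem_J_of 0 G 0 hs ?_).1
    rw [map_zero]
    have e1 := congrArg (tau 0) hG
    have hpa : tau 0 (term 1 (seed k f) 0) = 0 := tau_term_pa (N := 0) _
    have hpb : tau 0 (term 1 (seed k f) 1) = 0 := tau_term_pb (N := 0) _
    rw [NN, Fin.sum_univ_two, map_add, hpa, hpb, add_zero, map_mul] at e1
    exact (mul_eq_zero.1 e1).resolve_left (tau_D_ne_zero 0)
  | N + 2, f, hf, G, hs, hG =>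
    obtain ⟨G', _, hG'⟩ := exists_ind (seed_symm0 k (ds_symm hf.1))
    exact (mem_J_of (N + 1) G G' hs
      (tau_ind (seed_symm0 k hf.1) (tau_seed k hf) hG hG')).1

lemma ind_ds {N : ℕ} (k : ℤ) {f : R (N + 2)} (hf : f ∈ J (N + 2)) {G : R (N + 3)} (hs : SymmP G)
    (hG : D (N + 3) * G = NN (N + 2) (seed k f)) :
    D (N + 1) * dsR (N + 1) G = NN N (seed k (dsR N f)) := by
  obtain ⟨G', _, hG'⟩ := exists_ind (seed_symm0 k (ds_symm hf.1))
  rw [(mem_J_of (N + 1) G G' hs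
      (tau_ind (seed_symm0 k hf.1) (tau_seed k hf) hG hG')).2, hG']



/-! ### Iterated liftability -/

/-- `h` lies in `J N` and can be lifted `r` times along `ds`. -/
def Lift : ℕ → (N : ℕ) → R N → Prop
  | 0, N, h => h ∈ J N
  | r + 1, N, h => ∃ f, Lift r (N + 2) f ∧ dsR N f = h

lemma Lift_J {r : ℕ} : ∀ {N : ℕ} {h : R N}, Lift r N h → h ∈ J N := by
  induction r with
  | zero => intro N h hh; exact hh
  | succ r ih =>
    rintro N h ⟨f, hf, rfl⟩
    exact ds_mem_J (ih hf)

lemma Lift_add {r : ℕ} : ∀ {N : ℕ} {h k : R N}, Lift r N h → Lift r N k → Lift r N (h + k) := by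
  induction r with
  | zero => intro N h k hh hk; exact J_add hh hk
  | succ r ih =>
    rintro N h k ⟨f, hf, rfl⟩ ⟨g, hg, rfl⟩
    exact ⟨f + g, ih hf hg, map_add _ _ _⟩

lemma Lift_neg {r : ℕ} : ∀ {N : ℕ} {h : R N}, Lift r N h → Lift r N (-h) := by
  induction r with
  | zero => intro N h hh; exact J_neg hh
  | succ r ih =>
    rintro N h ⟨f, hf, rfl⟩
    exact ⟨-f, ih hf, map_neg _ _⟩

lemma Lift_int {r : ℕ} (c : ℤ) : ∀ {N : ℕ}, Lift r N (c : R N) := by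
  induction r with
  | zero => intro N; exact J_int c
  | succ r ih =>
    intro N
    exact ⟨c, ih, map_intCast _ _⟩

lemma Lift_sum {r N : ℕ} {ι : Type*} (s : Finset ι) (f : ι → R N) (h : ∀ k, Lift r N (f k)) :
    Lift r N (∑ k ∈ s, f k) := by
  classical
  induction s using Finset.induction_on with
  | empty => rw [Finset.sum_empty]; simpa using Lift_int (r := r) (N := N) 0
  | insert a s ha ih => rw [Finset.sum_insert ha]; exact Lift_add (h a) ih

lemma Lift_ind {r : ℕ} (k : ℤ) : ∀ {N : ℕ} {f : R N}, Lift r N f →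
    ∃ G, SymmP G ∧ Lift r (N + 1) G ∧ D (N + 1) * G = NN N (seed k f) := by
  induction r with
  | zero =>
    intro N f hf
    obtain ⟨G, hs, hG⟩ := exists_ind (seed_symm0 k (J_symm hf))
    exact ⟨G, hs, ind_J k hf hs hG, hG⟩
  | succ r ih =>
    rintro N f ⟨f', hf', rfl⟩
    obtain ⟨G, hs, hL, hG⟩ := ih hf'
    exact ⟨dsR (N + 1) G, ds_symm hs, ⟨G, hL, rfl⟩, ind_ds k (Lift_J hf') hs hG⟩

/-! ### Expansion in the first variable -/

lemma single_eq {a : ℕ} (m : Fin a → ℤ) (c : ℤ) :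
    (AddMonoidAlgebra.single m c : R a) = (c : R a) * mon m := by
  rw [mon, ← zsmul_eq_mul, AddMonoidAlgebra.smul_single]; simp

/-- The coefficient of `x_0^k`. -/
def cf {N : ℕ} (k : ℤ) : R (N + 1) →+ R N :=
  AddMonoidAlgebra.liftNC (Int.castAddHom (R N))
    (fun m => if m.toAdd 0 = k then mon (Fin.tail m.toAdd) else 0)

lemma cf_single {N : ℕ} (k : ℤ) (m : Fin (N + 1) → ℤ) (c : ℤ) :
    cf k (AddMonoidAlgebra.single m c)
      = (c : R N) * if m 0 = k then mon (Fin.tail m) else 0 := by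
  unfold cf
  rw [AddMonoidAlgebra.liftNC_single]
  rfl

lemma cf_perm {N : ℕ} (k : ℤ) (u : Equiv.Perm (Fin N)) (g : R (N + 1)) :
    permHom u (cf k g) = cf k (permHom (ext1 u) g) := by
  induction g using R_induction with
  | h0 => simp
  | hadd f g hf hg => rw [map_add, map_add, map_add, map_add, hf, hg]
  | hs m c =>
    have h0 : permExp (ext1 u) m 0 = m 0 := by
      rw [permExp_apply]
      rw [(Equiv.symm_apply_eq _).2 (ext1_zero u).symm]
    have h1 : Fin.tail (permExp (ext1 u) m) = permExp u (Fin.tail m) := by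
      funext j
      obtain ⟨i, rfl⟩ := u.surjective j
      rw [permExp_apply, Equiv.symm_apply_apply]
      unfold Fin.tail
      rw [← ext1_succ, permExp_apply, Equiv.symm_apply_apply]
    rw [permHom_eq (ext1 u), Subst_single, cf_single, cf_single, h0, h1, map_mul, map_intCast]
    congr 1
    split_ifs
    · rw [permHom_eq, Subst_mon]
    · exact map_zero _

lemma seed_zero {N : ℕ} (k : ℤ) : seed k (0 : R N) = 0 := by
  unfold seed; rw [map_zero, mul_zero]

lemma seed_add {N : ℕ} (k : ℤ) (f g : R N) : seed k (f + g) = seed k f + seed k g := by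
  unfold seed; rw [map_add, mul_add]

lemma expand {N : ℕ} (g : R (N + 1)) :
    ∃ s : Finset ℤ, ∀ t, s ⊆ t → g = ∑ k ∈ t, seed k (cf k g) := by
  induction g using R_induction with
  | h0 => exact ⟨∅, fun t _ => by simp [seed_zero]⟩
  | hadd f g hf hg =>
    obtain ⟨s, hs⟩ := hf
    obtain ⟨s', hs'⟩ := hg
    refine ⟨s ∪ s', fun t ht => ?_⟩
    simp only [map_add, seed_add, Finset.sum_add_distrib]
    rw [← hs t (Finset.union_subset_left ht), ← hs' t (Finset.union_subset_right ht)]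
  | hs m c =>
    refine ⟨{m 0}, fun t ht => ?_⟩
    rw [Finset.sum_eq_single (m 0)]
    · rw [cf_single, if_pos rfl, single_eq, seed, map_mul, map_intCast, Subst_mon, mul_left_comm,
        ← mon_add]
      congr 2
      funext l
      refine Fin.cases ?_ (fun i => ?_) l
      · rw [Pi.add_apply, e0Exp_zero]; simp
      · rw [Pi.add_apply, e0Exp_succ]; simp [Fin.tail]
    · intro k _ hk
      rw [cf_single, if_neg hk.symm, mul_zero, seed_zero]
    · intro h
      exact absurd (ht (Finset.mem_singleton_self _)) h

/-! ### The interpolation identity -/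

lemma lag (N : ℕ) :
    ∑ i : Fin (N + 1), sg (N + 1) i.cycleRange.symm *
      permHom i.cycleRange.symm (X 0 ^ N * E0 N (D N)) = (-1) ^ N * D (N + 1) := by
  rw [show D (N + 1) = _ from Matrix.det_succ_column _ (Fin.last N), Finset.mul_sum]
  refine Finset.sum_congr rfl fun i _ => ?_
  have h1 : sg (N + 1) i.cycleRange.symm = (-1) ^ (i : ℕ) := by
    unfold sg
    rw [Equiv.Perm.sign_symm, Fin.sign_cycleRange]
    simp
  have h2 : permHom i.cycleRange.symm (E0 N (D N))
      = ((Matrix.vandermonde (X : Fin (N + 1) → R (N + 1))).submatrix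
          i.succAbove (Fin.last N).succAbove).det := by
    have := hom_D ((permHom i.cycleRange.symm).comp (E0 N))
    rw [RingHom.comp_apply] at this
    rw [this]
    congr 1
    ext p q
    simp only [Matrix.vandermonde_apply, Matrix.submatrix_apply, RingHom.comp_apply, E0_X,
      permHom_X, Fin.cycleRange_symm_succ, Fin.succAbove_last, Fin.val_castSucc]
  rw [map_mul, map_pow, permHom_X, Fin.cycleRange_symm_zero, h1, h2, Matrix.vandermonde_apply,
    Fin.val_last, pow_add]
  have h3 : ((-1 : R (N + 1)) ^ N) * (-1) ^ N = 1 := by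
    rw [← mul_pow]; simp
  linear_combination (-(-1 : R (N + 1)) ^ (i : ℕ) * X i ^ N *
    ((Matrix.vandermonde (X : Fin (N + 1) → R (N + 1))).submatrix
          i.succAbove (Fin.last N).succAbove).det) * h3

lemma NN_special {N : ℕ} {g : R (N + 1)} (hg : SymmP g) :
    NN N (X 0 ^ N * E0 N (P N) * g) = (-1) ^ N * D (N + 1) * (P (N + 1) * g) := by
  rw [← lag, Finset.sum_mul]
  unfold NN
  refine Finset.sum_congr rfl fun i _ => ?_
  unfold term
  have : T0 N (X 0 ^ N * E0 N (P N) * g) = (X 0 ^ N * E0 N (D N)) * (P (N + 1) * g) := by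
    rw [T0, P_succ]; ring
  rw [this, map_mul, map_mul _ (P (N + 1)) g, P_symm, hg]
  ring

lemma X0_pow {N : ℕ} (k : ℕ) : (X 0 : R (N + 1)) ^ k = mon (Pi.single 0 (k : ℤ)) := by
  induction k with
  | zero => simp [mon_zero]
  | succ k ih =>
    rw [pow_succ, ih, X_eq, ← mon_add, ← Pi.single_add]
    push_cast; rfl

lemma P_zero : P 0 = 1 := by rw [P_prod]; simp
lemma P_one : P 1 = 1 := by rw [P_succ, P_zero, Q]; simp

lemma Lift_P {r : ℕ} : ∀ {N : ℕ} {g : R N}, SymmP g → Lift r N (P N * g) := by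
  intro N
  induction N with
  | zero =>
    intro g hg0
    rw [P_zero, one_mul]
    clear hg0
    induction g using R_induction with
    | h0 => simpa using Lift_int (r := r) (N := 0) 0
    | hadd f g hf hg => exact Lift_add hf hg
    | hs m c =>
      rw [single_eq, Subsingleton.elim m 0, mon_zero, mul_one]
      exact Lift_int c
  | succ N ih =>
    intro g hg
    obtain ⟨s, hs⟩ := expand g
    have hs := hs s subset_rfl
    have hc : ∀ k : ℤ, SymmP (cf k g) := fun k u => by rw [cf_perm, hg]
    choose G _ hL hG using fun k : ℤ => Lift_ind (r := r) (k + N) (ih (hc k))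
    have key : D (N + 1) * ∑ k ∈ s, G k = (-1) ^ N * D (N + 1) * (P (N + 1) * g) := by
      rw [← NN_special hg, Finset.mul_sum, Finset.sum_congr rfl (fun k _ => hG k), ← NN_sum]
      congr 1
      conv_rhs => rw [hs, Finset.mul_sum]
      refine Finset.sum_congr rfl fun k _ => ?_
      rw [X0_pow, seed, seed, map_mul, Pi.single_add, mon_add]
      ring
    have key2 : ∑ k ∈ s, G k = (-1) ^ N * (P (N + 1) * g) := by
      refine mul_left_cancel₀ (D_ne_zero (N + 1)) ?_
      rw [key]; ring
    have hsum := Lift_sum s G hL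
    rw [key2] at hsum
    rcases neg_one_pow_eq_or (R (N + 1)) N with h | h
    · rwa [h, one_mul] at hsum
    · rw [h, neg_one_mul] at hsum
      simpa using Lift_neg hsum

lemma Lift_all (N : ℕ) : ∀ (r : ℕ) (h : R N), h ∈ J N → Lift r N h := by
  induction N using Nat.strong_induction_on with
  | _ N ih =>
    intro r h hh
    match N, ih, h, hh with
    | 0, _, h, hh => have := Lift_P (r := r) (J_symm hh); rwa [P_zero, one_mul] at this
    | 1, _, h, hh => have := Lift_P (r := r) (J_symm hh); rwa [P_one, one_mul] at this
    | N + 2, ih, h, hh =>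
      obtain ⟨f, hf, hfh⟩ := ih N (by omega) (r + 1) _ (ds_mem_J hh)
      have hd : h + -f ∈ J (N + 2) := J_add hh (J_neg (Lift_J hf))
      obtain ⟨g, hg, he⟩ := ker_ds hd (by rw [map_add, map_neg, hfh, add_neg_cancel])
      have := Lift_add (Lift_P (r := r) hg) hf
      rw [← he] at this
      simpa using this


/-- Let `n ≥ 4`.  If for every symmetric Laurent polynomial
`g ∈ R_{n-2}^{S_{n-2}}` the element `(∏_{1 ≤ i < j ≤ n-2} (1 - xᵢxⱼ)) ⬝ g`
lies in the image `dsₙ(Jₙ)`, then `dsₙ : Jₙ → J_{n-2}` is surjective. -/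
theorem ds_surjective_of_thinKac_in_image (n : ℕ) (hn : 4 ≤ n)
    (H : ∀ g : R (n - 2), SymmP g → ∃ f ∈ J n, ds n f = P (n - 2) * g) :
    ∀ h ∈ J (n - 2), ∃ f ∈ J n, ds n f = h := by
  obtain ⟨N, rfl⟩ : ∃ N, n = N + 2 := ⟨n - 2, by omega⟩
  intro h hh
  obtain ⟨f, hf, hfh⟩ := Lift_all N 1 h hh
  exact ⟨f, hf, hfh⟩

end
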